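/- arXiv:0706.3451 — 2 statements merged into one kernel-verified Lean document; each statement's English description precedes it below -/
import Mathlib

section
/- Let (A, 𝔪, k) be a commutative Noetherian local ring and suppose M is a finitely generated A-module of free reducible complexity with cx M = c > 0; choose modules M = K_0, K_1, …, K_c, integers n_1, …, n_c ≥ 0 and exact sequences 0 → K_{i−1} → K_i → Ω^{n_i}_A(K_{i−1}) → 0 with cx K_i = c − i, and set b = max_i { depth A − depth K_i }. Then for any finitely generated A-module N the following are equivalent: (i) there exists an integer t > b such that Ext^{t+i}_A(M,N) = 0 for all 0 ≤ i ≤ n_1 + ⋯ + n_c; (ii) Ext^i_A(M,N) = 0 for all i ≫ 0; (iii) Ext^i_A(M,N) = 0 for all i > b. -/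
open CategoryTheory Opposite Filter IsLocalRing

universe u

namespace ComplexityTest

variable (A : Type u) [CommRing A] [IsLocalRing A]

structure MinFreeRes (M : Type u) [AddCommGroup M] [Module A M] : Type u where
  b : ℕ → ℕ
  d : (n : ℕ) → ((Fin (b (n + 1)) → A) →ₗ[A] (Fin (b n) → A))
  aug : (Fin (b 0) → A) →ₗ[A] M
  aug_surjective : Function.Surjective aug
  exact_zero : Function.Exact (d 0) aug
  exact_succ : ∀ n, Function.Exact (d (n + 1)) (d n)
  minimal : ∀ n x i, d n x i ∈ maximalIdeal A

variable (M : Type u) [AddCommGroup M] [Module A M]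

def HasComplexityLE (t : ℕ) : Prop :=
  ∃ (R : MinFreeRes A M) (a : ℝ), ∀ᶠ n : ℕ in atTop, (R.b n : ℝ) ≤ a * (n : ℝ) ^ ((t : ℤ) - 1)

noncomputable def complexity : ℕ∞ :=
  sInf {c : ℕ∞ | ∃ t : ℕ, c = t ∧ HasComplexityLE A M t}

def HasProjDimLE (t : ℕ) : Prop :=
  ∃ R : MinFreeRes A M, ∀ i, t < i → R.b i = 0

noncomputable def projDim : ℕ∞ :=
  sInf {c : ℕ∞ | ∃ t : ℕ, c = t ∧ HasProjDimLE A M t}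

def HasFiniteProjDim : Prop :=
  ∃ t : ℕ, HasProjDimLE A M t

def IsSyzygyOf (S : Type u) [AddCommGroup S] [Module A S] : ℕ → Prop
  | 0 => Nonempty (S ≃ₗ[A] M)
  | 1 => ∃ R : MinFreeRes A M, Nonempty (S ≃ₗ[A] (LinearMap.ker R.aug))
  | (n + 2) => ∃ R : MinFreeRes A M, Nonempty (S ≃ₗ[A] (LinearMap.ker (R.d n)))

variable {A M} in
def IsSES {K S : Type u} [AddCommGroup K] [Module A K] [AddCommGroup S] [Module A S]
    (f : M →ₗ[A] K) (g : K →ₗ[A] S) : Prop :=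
  Function.Injective f ∧ Function.Exact f g ∧ Function.Surjective g

noncomputable def extModule (n : ℕ) (N : Type u) [AddCommGroup N] [Module A N] :
    ModuleCat A :=
  ((_root_.Ext A (ModuleCat.{u} A) n).obj (op (ModuleCat.of A M))).obj (ModuleCat.of A N)

def extVanish (n : ℕ) (N : Type u) [AddCommGroup N] [Module A N] : Prop :=
  Subsingleton (extModule A M n N)

/-- The `n`-th Tor module `Tor^A_n(M, N)`. -/
noncomputable def torModule (n : ℕ) (N : Type u) [AddCommGroup N] [Module A N] :
    ModuleCat A :=
  ((Tor (ModuleCat.{u} A) n).obj (ModuleCat.of A M)).obj (ModuleCat.of A N)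

/-- The vanishing `Tor^A_n(M, N) = 0`. -/
def torVanish (n : ℕ) (N : Type u) [AddCommGroup N] [Module A N] : Prop :=
  Subsingleton (torModule A M n N)

noncomputable def depth : ℕ∞ :=
  sInf {c : ℕ∞ | ∃ i : ℕ, c = i ∧ ¬ extVanish A (ResidueField A) i M}

variable {A}

/-- The category of modules of *free reducible complexity* over the local ring `A`.
It is defined inductively: every finitely generated module of finite projective
dimension has free reducible complexity, and a finitely generated module `M` of finite
positive complexity has free reducible complexity provided there is a short exact
sequence `0 → M → K → Ω^n_A(M) → 0` (necessarily induced by a cohomology element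
`η ∈ Ext^{n+1}_A(M,M)`) where `K` is a finitely generated module of free reducible
complexity with `cx K = cx M - 1`. -/
inductive HasFreeRedCxCat : ModuleCat.{u} A → Prop
  | of_finite_projDim (M : ModuleCat.{u} A) (hfg : Module.Finite A M)
      (h : HasFiniteProjDim A M) : HasFreeRedCxCat M
  | step (M K S : ModuleCat.{u} A) (n : ℕ)
      (hfg : Module.Finite A M) (hKfg : Module.Finite A K)
      (hpos : 0 < complexity A M) (hfin : complexity A M ≠ ⊤)
      (hsyz : IsSyzygyOf A M S n)
      (f : M →ₗ[A] K) (g : K →ₗ[A] S) (hses : IsSES f g)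
      (hcx : complexity A K = complexity A M - 1)
      (hK : HasFreeRedCxCat K) : HasFreeRedCxCat M

/-- The category of modules of *reducible complexity* over the local ring `A`: as for
free reducible complexity, but where in addition the reductions are required to
preserve depth. -/
inductive HasRedCxCat : ModuleCat.{u} A → Prop
  | of_finite_projDim (M : ModuleCat.{u} A) (hfg : Module.Finite A M)
      (h : HasFiniteProjDim A M) : HasRedCxCat M
  | step (M K S : ModuleCat.{u} A) (n : ℕ)
      (hfg : Module.Finite A M) (hKfg : Module.Finite A K)
      (hpos : 0 < complexity A M) (hfin : complexity A M ≠ ⊤)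
      (hsyz : IsSyzygyOf A M S n)
      (f : M →ₗ[A] K) (g : K →ₗ[A] S) (hses : IsSES f g)
      (hcx : complexity A K = complexity A M - 1)
      (hdepth : depth A K = depth A M)
      (hK : HasRedCxCat K) : HasRedCxCat M

variable (A)

/-- `M` has free reducible complexity. -/
def HasFreeRedCx (M : Type u) [AddCommGroup M] [Module A M] : Prop :=
  HasFreeRedCxCat (ModuleCat.of A M)

/-- `M` has reducible complexity. -/
def HasRedCx (M : Type u) [AddCommGroup M] [Module A M] : Prop :=
  HasRedCxCat (ModuleCat.of A M)

/-- A Noetherian local ring is Gorenstein if it has finite injective dimension over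
itself; by Bass' characterization, this is equivalent to the vanishing of
`Ext^i_A(k, A)` for all sufficiently large `i`. -/
def IsGorenstein : Prop :=
  ∃ n : ℕ, ∀ i : ℕ, n < i → extVanish A (ResidueField A) i A

end ComplexityTest

open ComplexityTest

/-!
Reducing `M` step by step ends at a module `K_c` of finite projective dimension. By the
Auslander–Buchsbaum formula `pd K_c = depth A - depth K_c ≤ b`, so `Ext^i(K_c, N) = 0` for `i > b`.
Vanishing then descends along each sequence `0 → K_{i-1} → K_i → Ω^{n_i}(K_{i-1}) → 0`: once
`Ext^j(K_i, N) = 0` for all `j > b`, the connecting homomorphisms give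
`Ext^j(K_{i-1}, N) ≅ Ext^{j+1}(Ω^{n_i} K_{i-1}, N) ≅ Ext^{j+n_i+1}(K_{i-1}, N)` for `j > b`, and a
sequence of period `n_i + 1` is zero as soon as it vanishes on `n_i + 1` consecutive degrees.
-/

namespace ComplexityTest

section Abelian

universe v w

variable {C : Type u} [Category.{v} C] [Abelian C] [HasExt.{w} C] {X X' Y Y' : C} {n : ℕ}

theorem subsingleton_ext_congr (e : X ≅ X') (e' : Y ≅ Y') :
    Subsingleton (Abelian.Ext X Y n) ↔ Subsingleton (Abelian.Ext X' Y' n) :=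
  (((Abelian.extFunctor n).mapIso e.symm.op).app Y ≪≫
    ((Abelian.extFunctor n).obj (op X')).mapIso e').addCommGroupIsoToAddEquiv.subsingleton_congr

variable {S : ShortComplex C}

theorem subsingleton_ext_X₂ (hS : S.ShortExact) (h₃ : Subsingleton (Abelian.Ext S.X₃ Y n))
    (h₁ : Subsingleton (Abelian.Ext S.X₁ Y n)) : Subsingleton (Abelian.Ext S.X₂ Y n) := by
  refine subsingleton_of_forall_eq 0 fun x ↦ ?_
  obtain ⟨y, rfl⟩ :=
    Abelian.Ext.contravariant_sequence_exact₂ hS Y x (Subsingleton.elim _ _)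
  rw [Subsingleton.elim y 0, Abelian.Ext.comp_zero]

theorem subsingleton_ext_X₁ (hS : S.ShortExact) (h₂ : Subsingleton (Abelian.Ext S.X₂ Y n))
    (h₃ : Subsingleton (Abelian.Ext S.X₃ Y (n + 1))) : Subsingleton (Abelian.Ext S.X₁ Y n) := by
  refine subsingleton_of_forall_eq 0 fun x ↦ ?_
  obtain ⟨y, rfl⟩ :=
    Abelian.Ext.contravariant_sequence_exact₁ hS Y x (add_comm 1 n) (Subsingleton.elim _ _)
  rw [Subsingleton.elim y 0, Abelian.Ext.comp_zero]

theorem subsingleton_ext_X₃ (hS : S.ShortExact) (h₁ : Subsingleton (Abelian.Ext S.X₁ Y n))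
    (h₂ : Subsingleton (Abelian.Ext S.X₂ Y (n + 1))) :
    Subsingleton (Abelian.Ext S.X₃ Y (n + 1)) := by
  refine subsingleton_of_forall_eq 0 fun x ↦ ?_
  obtain ⟨y, rfl⟩ :=
    Abelian.Ext.contravariant_sequence_exact₃ hS Y x (Subsingleton.elim _ _) (add_comm 1 n)
  rw [Subsingleton.elim y 0, Abelian.Ext.comp_zero]

theorem subsingleton_ext_X₁_iff_of_projective_X₂ (hS : S.ShortExact) [Projective S.X₂] :
    Subsingleton (Abelian.Ext S.X₁ Y (n + 1)) ↔ Subsingleton (Abelian.Ext S.X₃ Y (n + 2)) :=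
  ⟨fun h ↦ subsingleton_ext_X₃ hS h (Abelian.Ext.subsingleton_of_projective ..),
    subsingleton_ext_X₁ hS (Abelian.Ext.subsingleton_of_projective ..)⟩

theorem subsingleton_ext_zero_iff (P : ProjectiveResolution X) :
    Subsingleton (Abelian.Ext X Y 0) ↔
      ∀ f : P.complex.X 0 ⟶ Y, P.complex.d 1 0 ≫ f = 0 → f = 0 := by
  rw [Abelian.Ext.addEquiv₀.subsingleton_congr]
  refine ⟨fun h f hf ↦ ?_, fun h ↦ subsingleton_of_forall_eq 0
    fun x : ((ChainComplex.single₀ C).obj X).X 0 ⟶ Y ↦ ?_⟩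
  · have hdesc : P.exact₀.desc f hf = 0 := h.elim (P.exact₀.desc f hf : X ⟶ Y) 0
    rw [← P.exact₀.g_desc f hf, hdesc, Limits.comp_zero]
  · have : P.π.f 0 ≫ x = 0 := h _ (by
      rw [← Category.assoc, P.complex_d_comp_π_f_zero, Limits.zero_comp])
    exact (cancel_epi (P.π.f 0)).1 (this.trans Limits.comp_zero.symm)

theorem subsingleton_ext_succ_iff (P : ProjectiveResolution X) :
    Subsingleton (Abelian.Ext X Y (n + 1)) ↔
      ∀ f : P.complex.X (n + 1) ⟶ Y, P.complex.d (n + 2) (n + 1) ≫ f = 0 →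
        ∃ g : P.complex.X n ⟶ Y, P.complex.d (n + 1) n ≫ g = f := by
  refine ⟨fun h f hf ↦ ?_, fun h ↦ subsingleton_of_forall_eq 0 fun x ↦ ?_⟩
  · rw [← P.extMk_eq_zero_iff f (n + 2) rfl hf n rfl]
    exact Subsingleton.elim _ _
  · obtain ⟨f, hf, rfl⟩ := P.extMk_surjective x (n + 2) rfl
    exact (P.extMk_eq_zero_iff f (n + 2) rfl hf n rfl).2 (h f hf)

end Abelian

section Comparison

variable {A : Type u} [CommRing A]

/-- For `n = 0` the truncated `n - 1` makes the last differential `P.complex.d 0 0 = 0`, so the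
condition reads `f = 0`. -/
theorem subsingleton_ext_obj_iff {X : ModuleCat.{u} A} (P : ProjectiveResolution X)
    (Y : ModuleCat.{u} A) (n : ℕ) :
    Subsingleton (((_root_.Ext A (ModuleCat.{u} A) n).obj (op X)).obj Y) ↔
      ∀ f : P.complex.X n ⟶ Y, P.complex.d (n + 1) n ≫ f = 0 →
        ∃ g : P.complex.X (n - 1) ⟶ Y, P.complex.d n (n - 1) ≫ g = f := by
  rw [← ModuleCat.isZero_iff_subsingleton, (P.isoExt (R := A) n Y).isZero_iff,
    ← HomologicalComplex.exactAt_iff_isZero_homology,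
    HomologicalComplex.exactAt_iff' _ (n - 1) n (n + 1) (by cases n <;> simp) (by simp),
    ShortComplex.moduleCat_exact_iff]
  rfl

theorem extVanish_iff {M N : Type u} [AddCommGroup M] [Module A M]
    [AddCommGroup N] [Module A N] {n : ℕ} :
    extVanish A M n N ↔ Subsingleton (Abelian.Ext (ModuleCat.of A M) (ModuleCat.of A N) n) := by
  have P := projectiveResolution (ModuleCat.of A M)
  rw [extVanish, extModule, subsingleton_ext_obj_iff P]
  cases n with
  | zero => simp [subsingleton_ext_zero_iff P, eq_comm]
  | succ n => rw [subsingleton_ext_succ_iff P, Nat.add_sub_cancel]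

end Comparison

section Modules

universe v

variable {R : Type u} [CommRing R]

theorem mem_ideal_smul_top_pi {κ : Type*} [Finite κ] {I : Ideal R} {v : κ → R}
    (hv : ∀ j, v j ∈ I) : v ∈ I • (⊤ : Submodule R (κ → R)) := by
  classical
  have := Fintype.ofFinite κ
  rw [pi_eq_sum_univ' v]
  exact Submodule.sum_mem _ fun j _ ↦ Submodule.smul_mem_smul (hv j) trivial

theorem mem_ideal_smul_top_hom {F N : Type*} [AddCommGroup F] [Module R F] [Module.Free R F]
    [Module.Finite R F] [AddCommGroup N] [Module R N] {I : Ideal R} {φ : F →ₗ[R] N}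
    (hφ : ∀ v, φ v ∈ I • (⊤ : Submodule R N)) : φ ∈ I • (⊤ : Submodule R (F →ₗ[R] N)) := by
  let b := Module.Free.chooseBasis R F
  have hsum : φ = ∑ i, LinearMap.smulRightₗ (b.coord i) (φ (b i)) :=
    b.ext fun j ↦ by simp [Finsupp.single_apply]
  rw [hsum]
  refine Submodule.sum_mem _ fun i _ ↦ ?_
  have hmap : I • (⊤ : Submodule R N) ≤
      (I • (⊤ : Submodule R (F →ₗ[R] N))).comap (LinearMap.smulRightₗ (b.coord i)) :=
    Submodule.smul_top_le_comap_smul_top I _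
  exact hmap (hφ (b i))

variable [Small.{v} R]

theorem subsingleton_ext_pi_iff {ι : Type} [Finite ι] {X : ModuleCat.{v} R} {M : ι → Type v}
    [∀ i, AddCommGroup (M i)] [∀ i, Module R (M i)] {n : ℕ} :
    Subsingleton (Abelian.Ext X (ModuleCat.of R (∀ i, M i)) n) ↔
      ∀ i, Subsingleton (Abelian.Ext X (ModuleCat.of R (M i)) n) := by
  classical
  have := Fintype.ofFinite ι
  rw [← subsingleton_ext_congr (Iso.refl X)
      (ModuleCat.biproductIsoPi fun i ↦ ModuleCat.of R (M i)),
    (Abelian.Ext.addEquivBiproduct X (Limits.biproduct.isBilimit _) n).subsingleton_congr]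
  exact ⟨fun _ i ↦
    (Pi.single_injective (M := fun i ↦ Abelian.Ext X (ModuleCat.of R (M i)) n) i).subsingleton,
    fun _ ↦ inferInstance⟩

theorem ext_comp_mk₀_eq_zero_of_mem_smul_top {I : Ideal R} {L X Y : Type v}
    [AddCommGroup L] [Module R L] [AddCommGroup X] [Module R X] [AddCommGroup Y] [Module R Y]
    (hI : I ≤ Module.annihilator R L) {φ : X →ₗ[R] Y} (hφ : φ ∈ I • (⊤ : Submodule R (X →ₗ[R] Y)))
    {n : ℕ} (x : Abelian.Ext (ModuleCat.of R L) (ModuleCat.of R X) n) :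
    x.comp (Abelian.Ext.mk₀ (ModuleCat.ofHom φ)) (add_zero n) = 0 := by
  have smul_eq_zero : ∀ r ∈ I, r • x = 0 := fun r hr ↦ by
    rw [Abelian.Ext.smul_eq_comp_mk₀]
    exact DFunLike.congr_fun (congrArg AddCommGrpCat.Hom.hom
      (Abelian.Ext.postcomp_smul_id_eq_zero_of_mem_annihilator (hI hr) n)) x
  induction hφ using Submodule.smul_induction_on' with
  | smul r hr ψ _ =>
    rw [show ModuleCat.ofHom (r • ψ) = r • ModuleCat.ofHom ψ from rfl, Abelian.Ext.mk₀_smul,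
      Abelian.Ext.comp_smul, ← Abelian.Ext.smul_comp, smul_eq_zero r hr, Abelian.Ext.zero_comp]
  | add φ _ ψ _ hφ hψ =>
    rw [ModuleCat.ofHom_add, Abelian.Ext.mk₀_add, Abelian.Ext.comp_add, hφ, hψ, add_zero]

end Modules

section Resolutions

variable {A : Type u} [CommRing A]

theorem IsSES.shortExact {X Y Z : Type u} [AddCommGroup X] [Module A X] [AddCommGroup Y]
    [Module A Y] [AddCommGroup Z] [Module A Z] {f : X →ₗ[A] Y} {g : Y →ₗ[A] Z} (h : IsSES f g) :
    (ShortComplex.moduleCatMk f g h.2.1.linearMap_comp_eq_zero).ShortExact where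
  exact := (ShortComplex.ShortExact.moduleCat_exact_iff_function_exact _).2 h.2.1
  mono_f := (ModuleCat.mono_iff_injective _).2 h.1
  epi_g := (ModuleCat.epi_iff_surjective _).2 h.2.2

variable [IsLocalRing A] {M : Type u} [AddCommGroup M] [Module A M]

namespace MinFreeRes

/-- The minimal free resolution of the first syzygy obtained by deleting the degree `0` term. -/
def shift (R : MinFreeRes A M) : MinFreeRes A (LinearMap.ker R.aug) where
  b n := R.b (n + 1)
  d n := R.d (n + 1)
  aug := (R.d 0).codRestrict _ R.exact_zero.apply_apply_eq_zero
  aug_surjective := by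
    rintro ⟨y, hy⟩
    obtain ⟨x, rfl⟩ := (R.exact_zero y).1 hy
    exact ⟨x, rfl⟩
  exact_zero _ := Subtype.ext_iff.trans (R.exact_succ 0 _)
  exact_succ n := R.exact_succ (n + 1)
  minimal n := R.minimal (n + 1)

theorem subsingleton (R : MinFreeRes A M) (h : R.b 0 = 0) : Subsingleton M :=
  have : IsEmpty (Fin (R.b 0)) := by rw [h]; infer_instance
  R.aug_surjective.subsingleton

theorem aug_bijective (R : MinFreeRes A M) (h : R.b 1 = 0) : Function.Bijective R.aug :=
  have := R.shift.subsingleton h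
  ⟨LinearMap.ker_eq_bot.1 Submodule.eq_bot_of_subsingleton, R.aug_surjective⟩

theorem subsingleton_ext_ker_aug_iff (R : MinFreeRes A M) (Y : ModuleCat.{u} A) (i : ℕ) :
    Subsingleton (Abelian.Ext (ModuleCat.of A (LinearMap.ker R.aug)) Y (i + 1)) ↔
      Subsingleton (Abelian.Ext (ModuleCat.of A M) Y (i + 2)) :=
  subsingleton_ext_X₁_iff_of_projective_X₂ (LinearMap.shortExact_shortComplexKer R.aug_surjective)

theorem hasProjectiveDimensionLT {p : ℕ} : ∀ {M : Type u} [AddCommGroup M] [Module A M]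
    (R : MinFreeRes A M), (∀ i, p ≤ i → R.b i = 0) →
      HasProjectiveDimensionLT (ModuleCat.of A M) p := by
  induction p with
  | zero =>
    intro M _ _ R hR
    have := R.subsingleton (hR 0 le_rfl)
    exact (ModuleCat.isZero_of_subsingleton _).hasProjectiveDimensionLT_zero
  | succ p ih =>
    intro M _ _ R hR
    have hker := ih R.shift fun i hi ↦ hR (i + 1) (Nat.succ_le_succ hi)
    exact (LinearMap.shortExact_shortComplexKer R.aug_surjective).hasProjectiveDimensionLT_X₃ p
      hker inferInstance

end MinFreeRes

theorem HasProjDimLE.hasProjectiveDimensionLE {t : ℕ} (h : HasProjDimLE A M t) :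
    HasProjectiveDimensionLE (ModuleCat.of A M) t :=
  let ⟨R, hR⟩ := h
  R.hasProjectiveDimensionLT hR

namespace IsSyzygyOf

variable {S : Type u} [AddCommGroup S] [Module A S]

theorem exists_ker_aug {n : ℕ} (h : IsSyzygyOf A M S (n + 1)) :
    ∃ R : MinFreeRes A M, IsSyzygyOf A (LinearMap.ker R.aug) S n := by
  match n, h with
  | 0, h => exact h
  | 1, ⟨R, ⟨e⟩⟩ =>
    have hker : LinearMap.ker (R.d 0) = LinearMap.ker R.shift.aug :=
      (LinearMap.ker_codRestrict ..).symm
    exact ⟨R, R.shift, ⟨e.trans (LinearEquiv.ofEq _ _ hker)⟩⟩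
  | n + 2, ⟨R, ⟨e⟩⟩ => exact ⟨R, R.shift, ⟨e⟩⟩

theorem subsingleton_ext_iff {n : ℕ} (h : IsSyzygyOf A M S n) (Y : ModuleCat.{u} A) (i : ℕ) :
    Subsingleton (Abelian.Ext (ModuleCat.of A S) Y (i + 1)) ↔
      Subsingleton (Abelian.Ext (ModuleCat.of A M) Y (i + 1 + n)) := by
  induction n generalizing M with
  | zero => exact subsingleton_ext_congr h.some.toModuleIso (Iso.refl Y)
  | succ n ih =>
    obtain ⟨R, hR⟩ := h.exists_ker_aug
    rw [ih hR, add_right_comm, R.subsingleton_ext_ker_aug_iff,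
      show i + 1 + (n + 1) = i + n + 2 by lia]

end IsSyzygyOf

end Resolutions

section Depth

variable {A : Type u} [CommRing A] [IsLocalRing A] {M : Type u} [AddCommGroup M] [Module A M]

theorem le_depth_iff {n : ℕ∞} :
    n ≤ depth A M ↔ ∀ i : ℕ, (i : ℕ∞) < n →
      Subsingleton (Abelian.Ext (ModuleCat.of A (ResidueField A)) (ModuleCat.of A M) i) := by
  simp only [depth, le_sInf_iff, ← extVanish_iff]
  refine ⟨fun h i hi ↦ by_contra fun hv ↦ (h i ⟨i, rfl, hv⟩).not_gt hi, ?_⟩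
  rintro h _ ⟨i, rfl, hv⟩
  exact not_lt.1 fun hi ↦ hv (h i hi)

theorem subsingleton_ext_of_lt_depth {i : ℕ} (hi : (i : ℕ∞) < depth A M) :
    Subsingleton (Abelian.Ext (ModuleCat.of A (ResidueField A)) (ModuleCat.of A M) i) :=
  le_depth_iff.1 le_rfl i hi

theorem depth_le_of_nontrivial_ext {i : ℕ}
    (h : Nontrivial (Abelian.Ext (ModuleCat.of A (ResidueField A)) (ModuleCat.of A M) i)) :
    depth A M ≤ i :=
  not_lt.1 fun hi ↦ not_subsingleton_iff_nontrivial.2 h (subsingleton_ext_of_lt_depth hi)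

theorem nontrivial_ext_of_depth_eq {d : ℕ} (hd : depth A M = d) :
    Nontrivial (Abelian.Ext (ModuleCat.of A (ResidueField A)) (ModuleCat.of A M) d) := by
  rw [← not_subsingleton_iff_nontrivial]
  intro h
  have : (d + 1 : ℕ∞) ≤ depth A M := le_depth_iff.2 fun i hi ↦ by
    rcases (Nat.lt_succ_iff.1 (by exact_mod_cast hi)).eq_or_lt with rfl | hid
    · exact h
    · exact subsingleton_ext_of_lt_depth (by rw [hd]; exact_mod_cast hid)
  rw [hd] at this
  exact absurd this (by exact_mod_cast Nat.not_succ_le_self d)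

theorem depth_congr {M' : Type u} [AddCommGroup M'] [Module A M'] (e : M ≃ₗ[A] M') :
    depth A M = depth A M' :=
  eq_of_forall_le_iff fun n ↦ by
    simp only [le_depth_iff, subsingleton_ext_congr (Iso.refl _) e.toModuleIso]

theorem depth_pi {ι : Type} [Finite ι] (M : ι → Type u) [∀ i, AddCommGroup (M i)]
    [∀ i, Module A (M i)] : depth A (∀ i, M i) = ⨅ i, depth A (M i) :=
  eq_of_forall_le_iff fun n ↦ by
    simp only [le_iInf_iff, le_depth_iff, subsingleton_ext_pi_iff]
    exact ⟨fun h i j hj ↦ h j hj i, fun h j hj i ↦ h i j hj⟩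

section Noetherian

variable [IsNoetherianRing A] [Module.Finite A M]

theorem length_le_supportDim {rs : List A} (hrs : RingTheory.Sequence.IsRegular M rs) :
    (rs.length : WithBot ℕ∞) ≤ Module.supportDim A M := by
  have : Nontrivial (M ⧸ Ideal.ofList rs • (⊤ : Submodule A M)) :=
    Submodule.Quotient.nontrivial_iff.2 hrs.top_ne_smul.symm
  rw [← Module.supportDim_add_length_eq_supportDim_of_isRegular rs hrs]
  have : Nonempty (Module.support A (M ⧸ Ideal.ofList rs • (⊤ : Submodule A M))) :=
    Module.nonempty_support_of_nontrivial.to_subtype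
  exact le_add_of_nonneg_left Order.krullDim_nonneg

variable [Nontrivial M]

theorem exists_isRegular_of_le_depth {n : ℕ} (hn : (n : ℕ∞) ≤ depth A M) :
    ∃ rs : List A, rs.length = n ∧ RingTheory.Sequence.IsRegular M rs := by
  have hlt : maximalIdeal A • (⊤ : Submodule A M) < ⊤ :=
    (Submodule.top_ne_ideal_smul_of_le_jacobson_annihilator
      (maximalIdeal_le_jacobson _)).symm.lt_top
  have hsupp : Module.support A (ResidueField A) = PrimeSpectrum.zeroLocus (maximalIdeal A) := by
    change Module.support A (A ⧸ maximalIdeal A) = _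
    rw [Module.support_eq_zeroLocus, Ideal.annihilator_quotient]
  have : Module.Finite A (ResidueField A) :=
    inferInstanceAs (Module.Finite A (A ⧸ maximalIdeal A))
  obtain ⟨rs, hlen, -, hrs⟩ := ModuleCat.exists_isRegular_of_exists_subsingleton_ext
    (maximalIdeal A) n (ModuleCat.of A M) hlt (ModuleCat.of A (ResidueField A)) hsupp
    fun i hi ↦ le_depth_iff.1 hn i (by exact_mod_cast hi)
  exact ⟨rs, hlen, hrs⟩

theorem depth_le_supportDim : (depth A M : WithBot ℕ∞) ≤ Module.supportDim A M := by
  obtain ⟨s, hs⟩ := WithBot.ne_bot_iff_exists.1 (Module.supportDim_ne_bot_of_nontrivial A M)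
  rw [← hs, WithBot.coe_le_coe, ← ENat.forall_natCast_le_iff_le]
  intro n hn
  obtain ⟨rs, rfl, hrs⟩ := exists_isRegular_of_le_depth hn
  exact WithBot.coe_le_coe.1 ((length_le_supportDim hrs).trans_eq hs.symm)

theorem depth_ne_top : depth A M ≠ ⊤ := fun h ↦
  ringKrullDim_ne_top.lt_top.not_ge (by
    simpa [h] using (depth_le_supportDim (A := A) (M := M)).trans
      (Module.supportDim_le_ringKrullDim A M))

end Noetherian

end Depth

section AuslanderBuchsbaum

variable {A : Type u} [CommRing A] [IsLocalRing A]

theorem depth_X₃_add_one {S : ShortComplex (ModuleCat.{u} A)} (hS : S.ShortExact) {d : ℕ}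
    (h₁ : depth A S.X₁ = d) (h₂ : d ≤ depth A S.X₂)
    (hf : ∀ x : Abelian.Ext (ModuleCat.of A (ResidueField A)) S.X₁ d,
      x.comp (Abelian.Ext.mk₀ S.f) (add_zero d) = 0) :
    depth A S.X₃ + 1 = d := by
  obtain ⟨x, hx⟩ := @exists_ne _ (nontrivial_ext_of_depth_eq h₁) 0
  cases d with
  | zero =>
    have := hS.mono_f
    exact absurd (Abelian.Ext.postcomp_mk₀_injective_of_mono _ S.f
      ((hf x).trans (map_zero _).symm)) hx
  | succ d =>
    obtain ⟨y, rfl⟩ := Abelian.Ext.covariant_sequence_exact₁ _ hS x (hf x) rfl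
    have hy : y ≠ 0 := by
      rintro rfl
      exact hx (Abelian.Ext.zero_comp ..)
    rw [Nat.cast_add_one]
    congr 1
    refine le_antisymm (depth_le_of_nontrivial_ext ⟨y, 0, hy⟩) (le_depth_iff.2 fun i hi ↦ ?_)
    have hid : i < d := by exact_mod_cast hi
    have hX₁ := subsingleton_ext_of_lt_depth (A := A) (M := S.X₁) (i := i + 1) (by
      rw [h₁]; exact_mod_cast Nat.succ_lt_succ hid)
    have hX₂ := subsingleton_ext_of_lt_depth (A := A) (M := S.X₂) (i := i)
      (h₂.trans_lt' (by exact_mod_cast hid.trans (Nat.lt_succ_self d)))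
    refine subsingleton_of_forall_eq 0 fun z ↦ ?_
    obtain ⟨w, rfl⟩ := Abelian.Ext.covariant_sequence_exact₃ _ hS z rfl (hX₁.elim _ _)
    rw [hX₂.elim w 0, Abelian.Ext.zero_comp]

variable {M : Type u} [AddCommGroup M] [Module A M]

namespace MinFreeRes

theorem apply_mem_maximalIdeal (R : MinFreeRes A M) {v : Fin (R.b 0) → A} (hv : R.aug v = 0)
    (j : Fin (R.b 0)) : v j ∈ maximalIdeal A := by
  obtain ⟨w, rfl⟩ := (R.exact_zero v).1 hv
  exact R.minimal 0 w j

theorem ext_comp_mk₀_ker_aug_eq_zero (R : MinFreeRes A M) (h : R.b 2 = 0) {n : ℕ}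
    (x : Abelian.Ext (ModuleCat.of A (ResidueField A)) (ModuleCat.of A (LinearMap.ker R.aug)) n) :
    x.comp (Abelian.Ext.mk₀ (ModuleCat.ofHom (LinearMap.ker R.aug).subtype)) (add_zero n) = 0 := by
  let e := LinearEquiv.ofBijective _ (R.shift.aug_bijective h)
  have := Module.Free.of_equiv e
  have := Module.Finite.equiv e
  refine ext_comp_mk₀_eq_zero_of_mem_smul_top (I := maximalIdeal A) ?_
    (mem_ideal_smul_top_hom fun v ↦ mem_ideal_smul_top_pi (R.apply_mem_maximalIdeal v.2)) x
  exact Ideal.annihilator_quotient.ge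

theorem depth_add_eq {d : ℕ} (hA : depth A A = d) {p : ℕ} :
    ∀ {M : Type u} [AddCommGroup M] [Module A M] (R : MinFreeRes A M), R.b p ≠ 0 →
      (∀ j, p < j → R.b j = 0) → depth A M + p = d := by
  induction p with
  | zero =>
    intro M _ _ R hp hR
    have := Fin.pos_iff_nonempty.1 (Nat.pos_of_ne_zero hp)
    rw [← depth_congr (LinearEquiv.ofBijective _ (R.aug_bijective (hR 1 one_pos))), depth_pi,
      ciInf_const, hA, Nat.cast_zero, add_zero]
  | succ p ih =>
    intro M _ _ R hp hR
    have hker := ih R.shift hp fun j hj ↦ hR (j + 1) (Nat.succ_lt_succ hj)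
    obtain ⟨k, hk⟩ := ENat.ne_top_iff_exists.1 (ne_top_of_le_ne_top (ENat.natCast_ne_top d)
      (le_self_add.trans_eq hker))
    have hkd : k + p = d := by rw [← hk] at hker; exact_mod_cast hker
    have hfree : (d : ℕ∞) ≤ depth A (Fin (R.b 0) → A) := by
      rw [depth_pi, ← hA]
      exact le_iInf fun _ ↦ le_rfl
    have hM : depth A M + 1 = k := by
      refine depth_X₃_add_one (LinearMap.shortExact_shortComplexKer R.aug_surjective) hk.symm
        (hfree.trans' (by exact_mod_cast Nat.le.intro hkd)) fun x ↦ ?_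
      rcases p.eq_zero_or_pos with rfl | hp
      · exact R.ext_comp_mk₀_ker_aug_eq_zero (hR 2 one_lt_two) x
      · have := subsingleton_ext_of_lt_depth
          (hfree.trans_lt' (by exact_mod_cast (by lia : k < d)))
        exact this.elim _ _
    rw [Nat.cast_add_one, add_comm (p : ℕ∞), ← add_assoc, hM]
    exact_mod_cast hkd

theorem depth_add_le [IsNoetherianRing A] (R : MinFreeRes A M) {t : ℕ}
    (hR : ∀ j, t < j → R.b j = 0) {i : ℕ} (hi : R.b i ≠ 0) : depth A M + i ≤ depth A A := by
  classical
  let p := Nat.findGreatest (fun j ↦ R.b j ≠ 0) t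
  have hit : i ≤ t := not_lt.1 fun hti ↦ hi (hR i hti)
  have hip : i ≤ p := Nat.le_findGreatest hit hi
  have hp : R.b p ≠ 0 := Nat.findGreatest_spec (P := fun j ↦ R.b j ≠ 0) hit hi
  have hpR : ∀ j, p < j → R.b j = 0 := fun j hj ↦ by_contra fun hj0 ↦
    hj.not_ge (Nat.le_findGreatest (not_lt.1 fun htj ↦ hj0 (hR j htj)) hj0)
  obtain ⟨d, hd⟩ := ENat.ne_top_iff_exists.1 (depth_ne_top (A := A) (M := A))
  rw [← hd, ← R.depth_add_eq hd.symm hp hpR]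
  gcongr

end MinFreeRes

theorem HasFiniteProjDim.hasProjDimLE [IsNoetherianRing A] (h : HasFiniteProjDim A M) {B : ℕ}
    (hB : depth A A - depth A M ≤ B) : HasProjDimLE A M B := by
  obtain ⟨t, R, hR⟩ := h
  refine ⟨R, fun i hi ↦ by_contra fun hi0 ↦ ?_⟩
  have hAB := R.depth_add_le hR hi0
  have hM : depth A M ≠ ⊤ := ne_top_of_le_ne_top depth_ne_top (le_self_add.trans hAB)
  have hiB : (i : ℕ∞) ≤ B :=
    ((ENat.addLECancellable_of_ne_top hM).le_tsub_of_add_le_left hAB).trans hB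
  exact hi.not_ge (by exact_mod_cast hiB)

end AuslanderBuchsbaum

section Complexity

variable {A : Type u} [CommRing A] [IsLocalRing A] {M : Type u} [AddCommGroup M] [Module A M]

theorem HasComplexityLE.hasFiniteProjDim (h : HasComplexityLE A M 0) : HasFiniteProjDim A M := by
  obtain ⟨R, a, hR⟩ := h
  have hlim : Tendsto (fun n : ℕ ↦ a * (n : ℝ) ^ (((0 : ℕ) : ℤ) - 1)) atTop (nhds 0) := by
    simpa [zpow_neg_one] using tendsto_inv_atTop_nhds_zero_nat.const_mul a
  obtain ⟨t, ht⟩ := eventually_atTop.1 (hR.and (hlim.eventually_lt_const one_pos))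
  exact ⟨t, R, fun i hi ↦
    Nat.lt_one_iff.1 (by exact_mod_cast (ht i hi.le).1.trans_lt (ht i hi.le).2)⟩

theorem hasFiniteProjDim_of_complexity_eq_zero (h : complexity A M = 0) :
    HasFiniteProjDim A M := by
  have hne : {c : ℕ∞ | ∃ t : ℕ, c = t ∧ HasComplexityLE A M t}.Nonempty :=
    Set.nonempty_iff_ne_empty.2 fun hempty ↦ ENat.top_ne_zero (by
      rw [← h, complexity, hempty, sInf_empty])
  obtain ⟨t, ht, htM⟩ := csInf_mem hne
  obtain rfl : t = 0 := by exact_mod_cast ht.symm.trans h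
  exact htM.hasFiniteProjDim

end Complexity

section Rigidity

theorem exists_lt_apply_add_eq_of_periodic {α : Type*} {φ : ℕ → α} {c : ℕ}
    (hφ : Function.Periodic φ c) (hc : 0 < c) (s i : ℕ) : ∃ j < c, φ (s + j) = φ i := by
  have hi : i % c ∈ (Finset.Ico s (s + c)).image (· % c) := by
    rw [Nat.image_Ico_mod, Finset.mem_range]
    exact Nat.mod_lt i hc
  obtain ⟨k, hk, hki⟩ := Finset.mem_image.1 hi
  obtain ⟨hsk, hkc⟩ := Finset.mem_Ico.1 hk
  refine ⟨k - s, by lia, ?_⟩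
  rw [Nat.add_sub_cancel' hsk, ← hφ.map_mod_nat k, hki, hφ.map_mod_nat]

section Abelian

universe v w

variable {C : Type u} [Category.{v} C] [Abelian C] [HasExt.{w} C] {X X' Y : C} {B m : ℕ}

/-- Above degree `B`, the groups `Ext^i(X, Y)` are rigid with window `m`: as soon as `m + 1`
consecutive ones vanish, all of them do. -/
def IsExtRigid (X Y : C) (B m : ℕ) : Prop :=
  ∀ t, B < t → (∀ j ≤ m, Subsingleton (Abelian.Ext X Y (t + j))) →
    ∀ i, B < i → Subsingleton (Abelian.Ext X Y i)

theorem isExtRigid_of_hasProjectiveDimensionLE [HasProjectiveDimensionLE X B] :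
    IsExtRigid X Y B m := fun _ _ _ i hi ↦
  HasProjectiveDimensionLT.subsingleton X (B + 1) i hi Y

namespace IsExtRigid

theorem of_iso (h : IsExtRigid X Y B m) (e : X ≅ X') : IsExtRigid X' Y B m :=
  fun t ht hv i hi ↦ (subsingleton_ext_congr e (Iso.refl Y)).1 (h t ht
    (fun j hj ↦ (subsingleton_ext_congr e (Iso.refl Y)).2 (hv j hj)) i hi)

theorem tfae (h : IsExtRigid X Y B m) : List.TFAE
    [∃ t, B < t ∧ ∀ j ≤ m, Subsingleton (Abelian.Ext X Y (t + j)),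
      ∀ᶠ i in atTop, Subsingleton (Abelian.Ext X Y i),
      ∀ i, B < i → Subsingleton (Abelian.Ext X Y i)] := by
  tfae_have 1 → 3 := fun ⟨t, ht, hv⟩ ↦ h t ht hv
  tfae_have 3 → 2 := fun hv ↦ (eventually_gt_atTop B).mono hv
  tfae_have 2 → 1 := fun hv ↦ by
    obtain ⟨t, ht, hBt⟩ := ((eventually_forall_ge_atTop.2 hv).and (eventually_gt_atTop B)).exists
    exact ⟨t, hBt, fun j _ ↦ ht _ (Nat.le_add_right t j)⟩
  tfae_finish

end IsExtRigid

end Abelian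

variable {A : Type u} [CommRing A] [IsLocalRing A] {Y : ModuleCat.{u} A} {B : ℕ}

theorem IsExtRigid.of_isSES {M K S : Type u} [AddCommGroup M] [Module A M] [AddCommGroup K]
    [Module A K] [AddCommGroup S] [Module A S] {f : M →ₗ[A] K} {g : K →ₗ[A] S} {n m : ℕ}
    (hsyz : IsSyzygyOf A M S n) (hses : IsSES f g) (h : IsExtRigid (ModuleCat.of A K) Y B m) :
    IsExtRigid (ModuleCat.of A M) Y B (n + m) := by
  intro t ht hv
  have hK : ∀ i, B < i → Subsingleton (Abelian.Ext (ModuleCat.of A K) Y i) := by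
    refine h t ht fun j hj ↦ ?_
    have hS : Subsingleton (Abelian.Ext (ModuleCat.of A S) Y (t + j)) := by
      obtain ⟨k, hk⟩ := Nat.exists_eq_add_one_of_ne_zero (show t + j ≠ 0 by lia)
      rw [hk, hsyz.subsingleton_ext_iff, ← hk, add_assoc]
      exact hv (j + n) (by lia)
    exact subsingleton_ext_X₂ hses.shortExact hS (hv j (by lia))
  have hper : Function.Periodic
      (fun i ↦ Subsingleton (Abelian.Ext (ModuleCat.of A M) Y (B + 1 + i))) (n + 1) := fun i ↦ by
    beta_reduce
    rw [show B + 1 + (i + (n + 1)) = B + 1 + i + 1 + n by lia]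
    refine propext ((hsyz.subsingleton_ext_iff Y _).symm.trans ⟨fun hS ↦ ?_, fun hM ↦ ?_⟩)
    · exact subsingleton_ext_X₁ hses.shortExact (hK _ (by lia)) hS
    · exact subsingleton_ext_X₃ hses.shortExact hM (hK _ (by lia))
  intro i hi
  obtain ⟨s, rfl⟩ := Nat.exists_eq_add_of_le ht
  obtain ⟨i, rfl⟩ := Nat.exists_eq_add_of_le hi
  obtain ⟨j, hj, hji⟩ := exists_lt_apply_add_eq_of_periodic hper n.succ_pos s i
  rw [← hji, ← add_assoc]
  exact hv j (by lia)

theorem isExtRigid_of_reducing_sequence {c : ℕ} {K : Fin (c + 1) → Type u}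
    [∀ i, AddCommGroup (K i)] [∀ i, Module A (K i)] {S : Fin c → Type u}
    [∀ i, AddCommGroup (S i)] [∀ i, Module A (S i)] {n : Fin c → ℕ}
    (hsyz : ∀ i : Fin c, IsSyzygyOf A (K i.castSucc) (S i) (n i))
    {f : ∀ i : Fin c, K i.castSucc →ₗ[A] K i.succ} {g : ∀ i : Fin c, K i.succ →ₗ[A] S i}
    (hses : ∀ i : Fin c, IsSES (f i) (g i)) (hlast : HasProjDimLE A (K (Fin.last c)) B) :
    IsExtRigid (ModuleCat.of A (K 0)) Y B (∑ i, n i) := by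
  induction c with
  | zero =>
    have := hlast.hasProjectiveDimensionLE
    exact isExtRigid_of_hasProjectiveDimensionLE (X := ModuleCat.of A (K (Fin.last 0)))
  | succ c ih =>
    rw [Fin.sum_univ_succ]
    exact IsExtRigid.of_isSES (hsyz 0) (hses 0)
      (ih (K := fun i ↦ K i.succ) (fun i ↦ hsyz i.succ) (fun i ↦ hses i.succ) hlast)

end Rigidity

theorem extVanishing_of_hasFreeRedCx_general
    {A : Type u} [CommRing A] [IsLocalRing A] [IsNoetherianRing A]
    {M : Type u} [AddCommGroup M] [Module A M] {c : ℕ}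
    {K : Fin (c + 1) → Type u} [∀ i, AddCommGroup (K i)] [∀ i, Module A (K i)] (e : K 0 ≃ₗ[A] M)
    {S : Fin c → Type u} [∀ i, AddCommGroup (S i)] [∀ i, Module A (S i)] {n : Fin c → ℕ}
    (hsyz : ∀ i : Fin c, IsSyzygyOf A (K i.castSucc) (S i) (n i))
    {f : ∀ i : Fin c, K i.castSucc →ₗ[A] K i.succ} {g : ∀ i : Fin c, K i.succ →ₗ[A] S i}
    (hses : ∀ i : Fin c, IsSES (f i) (g i)) (hlast : HasFiniteProjDim A (K (Fin.last c)))
    (N : Type u) [AddCommGroup N] [Module A N] :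
    ((∃ t : ℕ, (⨆ i, (depth A A - depth A (K i))) < (t : ℕ∞) ∧
        ∀ j : ℕ, j ≤ ∑ i, n i → extVanish A M (t + j) N) ↔
      (∀ᶠ i in Filter.atTop, extVanish A M i N)) ∧
    ((∀ᶠ i in Filter.atTop, extVanish A M i N) ↔
      (∀ i : ℕ, (⨆ i, (depth A A - depth A (K i))) < (i : ℕ∞) → extVanish A M i N)) := by
  obtain ⟨B, hB⟩ := ENat.ne_top_iff_exists.1 (ne_top_of_le_ne_top (depth_ne_top (A := A) (M := A))
    (iSup_le fun i ↦ tsub_le_self : ⨆ i, (depth A A - depth A (K i)) ≤ depth A A))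
  have hprojDim : HasProjDimLE A (K (Fin.last c)) B :=
    hlast.hasProjDimLE ((le_iSup (fun i ↦ depth A A - depth A (K i)) _).trans_eq hB.symm)
  have hrigid : IsExtRigid (ModuleCat.of A M) (ModuleCat.of A N) B (∑ i, n i) :=
    (isExtRigid_of_reducing_sequence hsyz hses hprojDim).of_iso e.toModuleIso
  simp only [extVanish_iff, ← hB, Nat.cast_lt]
  exact ⟨hrigid.tfae.out 0 1, hrigid.tfae.out 1 2⟩

end ComplexityTest

/-- **Proposition 2.3 (cohomology vanishing)**: let `M` be a module of free reducible
complexity `c > 0`, with reduction data `M = K 0, K 1, …, K c`, integers `n 1, …, n c`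
and short exact sequences `0 → K (i-1) → K i → Ω^{n i}(K (i-1)) → 0` with
`cx (K i) = c - i`, and let `b = max_i (depth A - depth (K i))`. Then for any module
`N` the following are equivalent: (i) there is a `t > b` with `Ext^{t+j}(M,N) = 0` for
`0 ≤ j ≤ n 1 + ⋯ + n c`; (ii) `Ext^i(M,N) = 0` for `i ≫ 0`; (iii) `Ext^i(M,N) = 0`
for all `i > b`. -/
theorem extVanishing_of_hasFreeRedCx
    (A : Type u) [CommRing A] [IsLocalRing A] [IsNoetherianRing A]
    (M : Type u) [AddCommGroup M] [Module A M] [Module.Finite A M]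
    (hM : HasFreeRedCx A M)
    (c : ℕ) (hcpos : 0 < c) (hcx : complexity A M = c)
    (K : Fin (c + 1) → Type u) [∀ i, AddCommGroup (K i)] [∀ i, Module A (K i)]
    [∀ i, Module.Finite A (K i)]
    (e : K 0 ≃ₗ[A] M)
    (S : Fin c → Type u) [∀ i, AddCommGroup (S i)] [∀ i, Module A (S i)]
    (n : Fin c → ℕ)
    (hsyz : ∀ i : Fin c, IsSyzygyOf A (K i.castSucc) (S i) (n i))
    (f : ∀ i : Fin c, K i.castSucc →ₗ[A] K i.succ)
    (g : ∀ i : Fin c, K i.succ →ₗ[A] S i)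
    (hses : ∀ i : Fin c, IsSES (f i) (g i))
    (hcxK : ∀ i : Fin c, complexity A (K i.succ) = (c : ℕ∞) - ((i : ℕ) + 1))
    (N : Type u) [AddCommGroup N] [Module A N] [Module.Finite A N] :
    ((∃ t : ℕ, (⨆ i, (depth A A - depth A (K i))) < (t : ℕ∞) ∧
        ∀ j : ℕ, j ≤ ∑ i, n i → extVanish A M (t + j) N) ↔
      (∀ᶠ i in Filter.atTop, extVanish A M i N)) ∧
    ((∀ᶠ i in Filter.atTop, extVanish A M i N) ↔
      (∀ i : ℕ, (⨆ i, (depth A A - depth A (K i))) < (i : ℕ∞) → extVanish A M i N)) := by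
  obtain ⟨c, rfl⟩ := Nat.exists_eq_add_of_le' hcpos
  exact extVanishing_of_hasFreeRedCx_general e hsyz hses
    (hasFiniteProjDim_of_complexity_eq_zero (by simpa using hcxK (Fin.last c))) N
end

section
/- Let (A, 𝔪, k) be a commutative Noetherian local ring and let M be a finitely generated A-module having free reducible complexity. Then pd_A M = sup { i | Ext^i_A(M,M) ≠ 0 }. In particular, if M has infinite projective dimension then Ext^i_A(M,M) ≠ 0 for infinitely many i. -/
open CategoryTheory Opposite Filter IsLocalRing

universe u

open ComplexityTest

/-!
Suppose `0 → M → K → Ω^n(M) → 0` is exact with `cx K < cx M`, and let `ζ ∈ Ext^{n+1}(M, M)` be its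
class. By dimension shifting, multiplication by `ζ` on `Ext^*(M, k)` is, up to an injective map, the
connecting homomorphism of the sequence, so its kernel in degree `i` is a quotient of `Ext^i(K, k)`
and has length at most `β_i(K)`. If `Ext^{(n+1)N}(M, M) = 0`, then `ζ^N = 0`, and filtering the
zero map `ζ^N` by its factors gives `β_i(M) ≤ ∑_{j < N} β_{i + (n+1)j}(K)`. This forces
`cx M ≤ cx K`, a contradiction; so `Ext^{(n+1)N}(M, M) ≠ 0` for all `N`.

If instead `M ≠ 0` and `pd M = d` is finite, then `Ext^d(M, -)` is right exact and
`Ext^d(M, k) ≠ 0`. As `M` surjects onto `k`, also `Ext^d(M, M) ≠ 0`.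
-/

namespace ComplexityTest

section Length

variable {A U V W : Type*} [Ring A] [AddCommGroup U] [Module A U] [AddCommGroup V] [Module A V]
  [AddCommGroup W] [Module A W]

/-- The length of the kernel of a linear map: the nullity, for modules over an arbitrary ring. -/
noncomputable def kerLength (f : U →ₗ[A] V) : ℕ∞ :=
  Module.length A (LinearMap.ker f)

theorem kerLength_comp_le (g : V →ₗ[A] W) (f : U →ₗ[A] V) :
    kerLength (g ∘ₗ f) ≤ kerLength f + kerLength g := by
  let q : LinearMap.ker (g ∘ₗ f) →ₗ[A] LinearMap.ker g := f.restrict fun _ hx => hx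
  let e : LinearMap.ker q →ₗ[A] LinearMap.ker f :=
    (LinearMap.ker (g ∘ₗ f)).subtype.restrict fun _ hx => congrArg Subtype.val hx
  have he : Function.Injective e := fun x y h =>
    Subtype.ext (Subtype.ext (congrArg Subtype.val h :))
  calc kerLength (g ∘ₗ f)
      = kerLength q + Module.length A (LinearMap.range q) :=
        Module.length_eq_add_of_exact (LinearMap.ker q).subtype q.rangeRestrict
          (Submodule.subtype_injective _) q.surjective_rangeRestrict
          (LinearMap.exact_iff.2 (by rw [LinearMap.ker_rangeRestrict, Submodule.range_subtype]))
    _ ≤ kerLength f + kerLength g :=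
        add_le_add (Module.length_le_of_injective e he)
          (Module.length_le_of_injective _ (Submodule.subtype_injective _))

end Length

section Ext

variable {C : Type*} [Category* C] [Abelian C] [HasExt C]

theorem subsingleton_ext_of_epi {X Y Z : C} {d : ℕ} [HasProjectiveDimensionLT X (d + 1)]
    (f : Y ⟶ Z) [Epi f] [Subsingleton (Abelian.Ext X Y d)] : Subsingleton (Abelian.Ext X Z d) := by
  have hS := ShortComplex.ShortExact.mk (ShortComplex.exact_kernel f)
  refine subsingleton_of_forall_eq 0 fun x => ?_
  obtain ⟨y, rfl⟩ := Abelian.Ext.covariant_sequence_exact₃ X hS x rfl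
    (Abelian.Ext.eq_zero_of_hasProjectiveDimensionLT _ (d + 1) le_rfl)
  rw [Subsingleton.elim y 0, Abelian.Ext.zero_comp]

/-- The Yoneda power `ζ ^ s` of a self-extension `ζ` of degree `n`. -/
noncomputable def extPow {X : C} {n : ℕ} (ζ : Abelian.Ext X X n) :
    (s : ℕ) → Abelian.Ext X X (n * s)
  | 0 => Abelian.Ext.mk₀ (𝟙 X)
  | s + 1 => (extPow ζ s).comp ζ rfl

variable {R : Type*} [CommRing R] [Linear R C]

theorem precompOfLinear_comp {X Y Z W : C} {a b c i j k : ℕ} (α : Abelian.Ext X Y a)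
    (β : Abelian.Ext Y Z b) (hab : a + b = c) (hi : b + i = j) (hj : a + j = k) (hk : c + i = k) :
    (α.comp β hab).precompOfLinear R W hk =
      α.precompOfLinear R W hj ∘ₗ β.precompOfLinear R W hi :=
  LinearMap.ext fun x => Abelian.Ext.comp_assoc α β x hab hi (by omega)

theorem precomp_mk₀_injective {X Y : C} (f : X ⟶ Y) [IsSplitEpi f] (W : C) {i j : ℕ}
    (h : 0 + i = j) : Function.Injective ((Abelian.Ext.mk₀ f).precompOfLinear R W h) := by
  obtain rfl : i = j := by omega
  refine Function.LeftInverse.injective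
    (g := (Abelian.Ext.mk₀ (section_ f)).precompOfLinear R W h) fun x => ?_
  exact (Abelian.Ext.mk₀_comp_mk₀_assoc _ _ x).trans (by simp)

theorem kerLength_precomp_extPow_le {X : C} {n : ℕ} (ζ : Abelian.Ext X X n) (W : C) (s : ℕ)
    {i k : ℕ} (hk : n * s + i = k) :
    kerLength ((extPow ζ s).precompOfLinear R W hk) ≤
      ∑ j ∈ Finset.range s, kerLength (ζ.precompOfLinear R W (a := i + n * j) rfl) := by
  induction s generalizing i with
  | zero =>
    obtain rfl : i = k := by omega
    have hid : (extPow ζ 0).precompOfLinear R W hk = LinearMap.id :=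
      LinearMap.ext fun x => Abelian.Ext.mk₀_id_comp x
    rw [hid, kerLength, LinearMap.ker_id, Module.length_bot]
    exact bot_le
  | succ s ih =>
    have hk' : n * s + (n + i) = k := by rw [← hk]; ring
    let κ (a : ℕ) : ℕ∞ := kerLength (ζ.precompOfLinear R W (a := a) rfl)
    calc kerLength ((extPow ζ (s + 1)).precompOfLinear R W hk)
        = kerLength ((extPow ζ s).precompOfLinear R W hk' ∘ₗ ζ.precompOfLinear R W rfl) :=
          congrArg kerLength (precompOfLinear_comp _ _ rfl rfl hk' hk)
      _ ≤ κ i + ∑ j ∈ Finset.range s, κ (n + i + n * j) :=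
          (kerLength_comp_le _ _).trans (add_le_add_right (ih hk') _)
      _ = ∑ j ∈ Finset.range (s + 1), κ (i + n * j) := by
          have hshift (j : ℕ) : n + i + n * j = i + n * (j + 1) := by ring
          simp only [hshift, Finset.sum_range_succ', mul_zero, add_zero, add_comm]

theorem kerLength_precomp_comp_extClass_le {S : ShortComplex C} (hS : S.ShortExact) {Y : C}
    {m : ℕ} (θ : Abelian.Ext Y S.X₃ m) (W : C)
    (hθ : ∀ j, Function.Injective (θ.precompOfLinear R W (rfl : m + j = m + j)))
    {i k : ℕ} (hk : m + 1 + i = k) :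
    kerLength ((θ.comp hS.extClass rfl).precompOfLinear R W hk) ≤
      Module.length R (Abelian.Ext S.X₂ W i) := by
  obtain rfl : m + (1 + i) = k := by omega
  have hker : LinearMap.ker ((θ.comp hS.extClass rfl).precompOfLinear R W hk) ≤
      LinearMap.range ((Abelian.Ext.mk₀ S.f).precompOfLinear R W (zero_add i)) := by
    rw [precompOfLinear_comp θ hS.extClass rfl rfl rfl hk,
      LinearMap.ker_comp_of_ker_eq_bot _ (LinearMap.ker_eq_bot.2 (hθ _))]
    exact fun x hx => Abelian.Ext.contravariant_sequence_exact₁ hS W x rfl hx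
  exact (Module.length_le_of_injective _ (Submodule.inclusion_injective hker)).trans
    (Module.length_le_of_surjective _ (LinearMap.surjective_rangeRestrict _))

theorem length_ext_le_sum {S : ShortComplex C} (hS : S.ShortExact) {m : ℕ}
    (θ : Abelian.Ext S.X₁ S.X₃ m) (W : C)
    (hθ : ∀ j, Function.Injective (θ.precompOfLinear R W (rfl : m + j = m + j))) (N : ℕ)
    [Subsingleton (Abelian.Ext S.X₁ S.X₁ ((m + 1) * N))] (i : ℕ) :
    Module.length R (Abelian.Ext S.X₁ W i) ≤
      ∑ j ∈ Finset.range N, Module.length R (Abelian.Ext S.X₂ W (i + (m + 1) * j)) := by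
  let ζ := θ.comp hS.extClass rfl
  have hζ : (extPow ζ N).precompOfLinear R W (a := i) rfl = 0 := by
    rw [Subsingleton.elim (extPow ζ N) 0]
    exact LinearMap.ext fun x => Abelian.Ext.zero_comp _ _ x _ rfl
  calc Module.length R (Abelian.Ext S.X₁ W i)
      = kerLength ((extPow ζ N).precompOfLinear R W (a := i) rfl) := by
        rw [hζ, kerLength, LinearMap.ker_zero, Module.length_top]
    _ ≤ _ := kerLength_precomp_extPow_le ζ W N rfl
    _ ≤ _ := Finset.sum_le_sum fun j _ => kerLength_precomp_comp_extClass_le hS θ W hθ rfl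

end Ext

section DerivedExt

variable {C : Type*} [Category* C] [Abelian C]

theorem subsingleton_hom_iff_of_exact {S : ShortComplex C} (hS : S.Exact) [Epi S.g] (Y : C) :
    Subsingleton (S.X₃ ⟶ Y) ↔ ∀ f : S.X₂ ⟶ Y, S.f ≫ f = 0 → f = 0 := by
  refine ⟨fun h f hf => ?_, fun h => subsingleton_of_forall_eq 0 fun φ => ?_⟩
  · rw [← hS.g_desc f hf, Subsingleton.elim (hS.desc f hf) 0, Limits.comp_zero]
  · rw [← cancel_epi S.g, Limits.comp_zero]
    exact h _ (by rw [← Category.assoc, S.zero, Limits.zero_comp])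

variable {R : Type*} [CommRing R] [Linear R C]

theorem exactAt_linearYonedaObj_zero_iff (K : ChainComplex C ℕ) (Y : C) :
    (K.linearYonedaObj R Y).ExactAt 0 ↔ ∀ f : K.X 0 ⟶ Y, K.d 1 0 ≫ f = 0 → f = 0 := by
  rw [HomologicalComplex.exactAt_iff' _ 0 0 1 (by simp) (by simp), ShortComplex.moduleCat_exact_iff]
  have hd (g : K.X 0 ⟶ Y) : K.d 0 0 ≫ g = 0 := by rw [K.shape _ _ (by simp), Limits.zero_comp]
  constructor
  · intro h f hf
    obtain ⟨g, hg⟩ := h f hf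
    exact hg.symm.trans (hd g)
  · intro h f hf
    exact ⟨0, (hd 0).trans (h f hf).symm⟩

theorem exactAt_linearYonedaObj_succ_iff (K : ChainComplex C ℕ) (Y : C) (n : ℕ) :
    (K.linearYonedaObj R Y).ExactAt (n + 1) ↔ ∀ f : K.X (n + 1) ⟶ Y,
      K.d (n + 2) (n + 1) ≫ f = 0 → ∃ g : K.X n ⟶ Y, K.d (n + 1) n ≫ g = f := by
  rw [HomologicalComplex.exactAt_iff' _ n (n + 1) (n + 2) (by simp) (by simp),
    ShortComplex.moduleCat_exact_iff]
  rfl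

variable [EnoughProjectives C] [HasExt C]

theorem isZero_derivedExt_iff (X Y : C) (n : ℕ) :
    Limits.IsZero (((_root_.Ext R C n).obj (op X)).obj Y) ↔ Subsingleton (Abelian.Ext X Y n) := by
  let P := projectiveResolution X
  rw [(P.isoExt (R := R) n Y).isZero_iff, ← HomologicalComplex.exactAt_iff_isZero_homology]
  cases n with
  | zero =>
    have : Epi (ShortComplex.mk _ _ P.complex_d_comp_π_f_zero).g := inferInstanceAs (Epi (P.π.f 0))
    rw [exactAt_linearYonedaObj_zero_iff, Abelian.Ext.homEquiv₀.subsingleton_congr]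
    exact (subsingleton_hom_iff_of_exact P.exact₀ Y).symm
  | succ n =>
    rw [exactAt_linearYonedaObj_succ_iff]
    refine ⟨fun h => subsingleton_of_forall_eq 0 fun x => ?_, fun h f hf => ?_⟩
    · obtain ⟨f, hf, rfl⟩ := P.extMk_surjective x (n + 2) rfl
      exact (P.extMk_eq_zero_iff f _ rfl hf n rfl).2 (h f hf)
    · exact (P.extMk_eq_zero_iff f _ rfl hf n rfl).1 (Subsingleton.elim _ _)

end DerivedExt

section Betti

variable {A : Type u} [CommRing A] {M K S : Type u} [AddCommGroup M] [Module A M]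
  [AddCommGroup K] [Module A K] [AddCommGroup S] [Module A S]

theorem extVanish_iff_s4 {i : ℕ} :
    extVanish A M i K ↔ Subsingleton (Abelian.Ext (ModuleCat.of A M) (ModuleCat.of A K) i) := by
  rw [extVanish, ← ModuleCat.isZero_iff_subsingleton]
  exact isZero_derivedExt_iff _ _ i

theorem IsSES.shortExact_s4 {f : M →ₗ[A] K} {g : K →ₗ[A] S} (h : IsSES f g) :
    (ShortComplex.mk (ModuleCat.ofHom f) (ModuleCat.ofHom g)
      (ModuleCat.hom_ext h.2.1.linearMap_comp_eq_zero)).ShortExact where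
  exact := (ShortComplex.ShortExact.moduleCat_exact_iff_function_exact _).2 h.2.1
  mono_f := (ModuleCat.mono_iff_injective _).2 h.1
  epi_g := (ModuleCat.epi_iff_surjective _).2 h.2.2

variable [IsLocalRing A]

variable (A) in
/-- The residue field `k` of `A`, as an object of the category of `A`-modules. -/
noncomputable abbrev residueFieldObj : ModuleCat.{u} A :=
  ModuleCat.of A (ResidueField A)

/-- The Betti number `β_i(X)`. The paper's `dim_k Ext^i(X, k)` is expressed as a length over `A`,
so that it makes sense, with values in `ℕ∞`, for every module. -/
noncomputable def betti (X : ModuleCat.{u} A) (i : ℕ) : ℕ∞ :=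
  Module.length A (Abelian.Ext X (residueFieldObj A) i)

theorem length_residueField : Module.length A (ResidueField A) = 1 := by
  rw [Module.length_eq_of_surjective (R := ResidueField A) residue_surjective, Module.length_eq_one]

theorem residueField_apply_eq_zero {ι : Type*} [Finite ι] (φ : (ι → A) →ₗ[A] ResidueField A)
    {x : ι → A} (hx : ∀ i, x i ∈ maximalIdeal A) : φ x = 0 := by
  have := Fintype.ofFinite ι
  classical
  rw [LinearMap.pi_apply_eq_sum_univ φ]
  refine Finset.sum_eq_zero fun i _ => ?_
  rw [Algebra.smul_def, ResidueField.algebraMap_eq, (residue_eq_zero_iff _).2 (hx i), zero_mul]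

/-- The minimal free resolution of the first syzygy of `M` obtained by dropping the degree `0`
term from a minimal free resolution of `M`. -/
noncomputable def MinFreeRes.tail (R : MinFreeRes A M) : MinFreeRes A (LinearMap.ker R.aug) where
  b n := R.b (n + 1)
  d n := R.d (n + 1)
  aug := (R.d 0).codRestrict _ fun x => (R.exact_zero _).2 ⟨x, rfl⟩
  aug_surjective := by
    rintro ⟨y, hy⟩
    obtain ⟨x, rfl⟩ := (R.exact_zero y).1 hy
    exact ⟨x, rfl⟩
  exact_zero y := Subtype.ext_iff.trans (R.exact_succ 0 y)
  exact_succ n := R.exact_succ (n + 1)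
  minimal n := R.minimal (n + 1)

theorem MinFreeRes.ker_tail_aug (R : MinFreeRes A M) :
    LinearMap.ker R.tail.aug = LinearMap.ker (R.d 0) :=
  LinearMap.ker_codRestrict _ _ _

theorem MinFreeRes.comp_d_zero (R : MinFreeRes A M)
    (φ : (Fin (R.b 0) → A) →ₗ[A] ResidueField A) : φ ∘ₗ R.d 0 = 0 :=
  LinearMap.ext fun y => residueField_apply_eq_zero φ (R.minimal 0 y)

theorem MinFreeRes.shortExact_s4 (R : MinFreeRes A M) : R.aug.shortComplexKer.ShortExact :=
  LinearMap.shortExact_shortComplexKer R.aug_surjective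

instance MinFreeRes.projective (R : MinFreeRes A M) : Projective R.aug.shortComplexKer.X₂ :=
  ModuleCat.projective_of_categoryTheory_projective (ModuleCat.of A (Fin (R.b 0) → A))

theorem MinFreeRes.precomp_extClass_bijective (R : MinFreeRes A M) {i j : ℕ} (h : 1 + i = j) :
    Function.Bijective
      (R.shortExact_s4.extClass.precompOfLinear A (residueFieldObj A) h) := by
  obtain rfl : i + 1 = j := by omega
  refine ⟨(injective_iff_map_eq_zero _).2 fun x hx => ?_, fun x => ?_⟩
  · obtain ⟨y, rfl⟩ := Abelian.Ext.contravariant_sequence_exact₁ R.shortExact_s4 _ x h hx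
    cases i with
    | succ i => rw [Abelian.Ext.eq_zero_of_projective y, Abelian.Ext.comp_zero]
    | zero =>
      obtain ⟨φ, rfl⟩ := Abelian.Ext.homEquiv₀.symm.surjective y
      have hφ : R.aug.shortComplexKer.f ≫ φ = 0 := by
        ext x
        obtain ⟨z, hz⟩ := (R.exact_zero x.1).1 x.2
        exact (congrArg φ.hom hz).symm.trans (LinearMap.congr_fun (R.comp_d_zero φ.hom) z)
      simp [hφ]
  · exact Abelian.Ext.contravariant_sequence_exact₃ R.shortExact_s4 _ x
      (Abelian.Ext.eq_zero_of_projective _) h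

theorem MinFreeRes.lcomp_aug_bijective (R : MinFreeRes A M) :
    Function.Bijective (LinearMap.lcomp A (ResidueField A) R.aug) :=
  ⟨LinearMap.lcomp_injective_of_surjective _ R.aug_surjective, fun φ =>
    (LinearMap.exact_lcomp_of_exact_of_surjective _ R.exact_zero R.aug_surjective φ).1
      (R.comp_d_zero φ)⟩

theorem MinFreeRes.betti_eq (R : MinFreeRes A M) (i : ℕ) : betti (ModuleCat.of A M) i = R.b i := by
  induction i generalizing M with
  | succ i ih =>
    exact (LinearEquiv.ofBijective _
      (R.precomp_extClass_bijective (add_comm 1 i))).length_eq.symm.trans (ih R.tail)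
  | zero =>
    calc betti (ModuleCat.of A M) 0
        = Module.length A (M →ₗ[A] ResidueField A) :=
          (Abelian.Ext.linearEquiv₀ (R := A)).length_eq.trans
            (ModuleCat.homLinearEquiv (S := A)).length_eq
      _ = Module.length A ((Fin (R.b 0) → A) →ₗ[A] ResidueField A) :=
          (LinearEquiv.ofBijective _ R.lcomp_aug_bijective).length_eq
      _ = Module.length A (Fin (R.b 0) → ResidueField A) :=
          ((Pi.basisFun A (Fin (R.b 0))).constr A).length_eq.symm
      _ = R.b 0 := by simp [length_residueField]

theorem IsSyzygyOf.exists_ker_aug_s4 {n : ℕ} (h : IsSyzygyOf A M S (n + 1)) :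
    ∃ R : MinFreeRes A M, IsSyzygyOf A (LinearMap.ker R.aug) S n := by
  match n, h with
  | 0, ⟨R, e⟩ => exact ⟨R, e⟩
  | 1, ⟨R, ⟨e⟩⟩ => exact ⟨R, R.tail, ⟨e.trans (LinearEquiv.ofEq _ _ R.ker_tail_aug.symm)⟩⟩
  | n + 2, ⟨R, e⟩ => exact ⟨R, R.tail, e⟩

/-- `θ` is the Yoneda class of the initial segment `0 → S → F_{n-1} → ⋯ → F_0 → M → 0` of a minimal
free resolution; minimality makes the dimension shift against `k` injective even into degree `n`. -/
theorem IsSyzygyOf.exists_precomp_injective {n : ℕ} (h : IsSyzygyOf A M S n) :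
    ∃ θ : Abelian.Ext (ModuleCat.of A M) (ModuleCat.of A S) n, ∀ j,
      Function.Injective (θ.precompOfLinear A (residueFieldObj A) (rfl : n + j = n + j)) := by
  induction n generalizing M with
  | zero =>
    obtain ⟨e⟩ := h
    exact ⟨Abelian.Ext.mk₀ e.toModuleIso.inv, fun j => precomp_mk₀_injective _ _ _⟩
  | succ n ih =>
    obtain ⟨R, hR⟩ := h.exists_ker_aug_s4
    obtain ⟨θ, hθ⟩ := ih hR
    refine ⟨R.shortExact_s4.extClass.comp θ (add_comm 1 n), fun j => ?_⟩
    rw [precompOfLinear_comp _ θ _ rfl (by omega)]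
    exact (R.precomp_extClass_bijective (by omega)).1.comp (hθ j)

theorem betti_le_sum {n : ℕ} (hS : IsSyzygyOf A M S n) {f : M →ₗ[A] K} {g : K →ₗ[A] S}
    (hfg : IsSES f g) {N : ℕ} (hN : extVanish A M ((n + 1) * N) M) (i : ℕ) :
    betti (ModuleCat.of A M) i ≤
      ∑ j ∈ Finset.range N, betti (ModuleCat.of A K) (i + (n + 1) * j) := by
  obtain ⟨θ, hθ⟩ := hS.exists_precomp_injective
  have := extVanish_iff_s4.1 hN
  exact length_ext_le_sum hfg.shortExact_s4 θ _ hθ N i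

end Betti

section Complexity

open Asymptotics

theorem isTheta_natCast_add (s : ℕ) :
    (fun n : ℕ => ((n + s : ℕ) : ℝ)) =Θ[atTop] fun n => (n : ℝ) := by
  simp only [Nat.cast_add]
  refine (IsEquivalent.refl.add_isLittleO ?_).isTheta
  exact isLittleO_const_left.2 (Or.inr (tendsto_norm_atTop_atTop.comp tendsto_natCast_atTop_atTop))

theorem isBigO_zpow_sum_shift {b : ℕ → ℝ} {p : ℤ}
    (hb : b =O[atTop] fun n : ℕ => (n : ℝ) ^ p) (N m : ℕ) :
    (fun n => ∑ j ∈ Finset.range N, b (n + m * j)) =O[atTop] fun n : ℕ => (n : ℝ) ^ p := by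
  refine IsBigO.fun_sum fun j _ => ?_
  exact (hb.comp_tendsto (tendsto_add_atTop_nat (m * j))).trans
    ((isTheta_natCast_add (m * j)).zpow p).isBigO

variable {A : Type u} [CommRing A] [IsLocalRing A] {M K : Type u} [AddCommGroup M] [Module A M]
  [AddCommGroup K] [Module A K]

theorem hasComplexityLE_iff_isBigO {t : ℕ} :
    HasComplexityLE A M t ↔ ∃ R : MinFreeRes A M,
      (fun n => (R.b n : ℝ)) =O[atTop] fun n : ℕ => (n : ℝ) ^ ((t : ℤ) - 1) := by
  refine exists_congr fun R => isBigO_iff.trans (exists_congr fun a => ?_) |>.symm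
  simp only [norm_zpow, RCLike.norm_natCast]

theorem HasComplexityLE.of_betti_le_sum (R : MinFreeRes A M) {N m : ℕ}
    (h : ∀ i, betti (ModuleCat.of A M) i ≤
      ∑ j ∈ Finset.range N, betti (ModuleCat.of A K) (i + m * j))
    {t : ℕ} (hK : HasComplexityLE A K t) : HasComplexityLE A M t := by
  obtain ⟨R', hR'⟩ := hasComplexityLE_iff_isBigO.1 hK
  refine hasComplexityLE_iff_isBigO.2 ⟨R, IsBigO.trans (.of_norm_le fun i => ?_)
    (isBigO_zpow_sum_shift hR' N m)⟩
  simp only [R.betti_eq, R'.betti_eq] at h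
  rw [RCLike.norm_natCast]
  exact_mod_cast h i

theorem complexity_le_of_betti_le_sum (R : MinFreeRes A M) {N m : ℕ}
    (h : ∀ i, betti (ModuleCat.of A M) i ≤
      ∑ j ∈ Finset.range N, betti (ModuleCat.of A K) (i + m * j)) :
    complexity A M ≤ complexity A K :=
  sInf_le_sInf fun _ ⟨t, ht, hK⟩ => ⟨t, ht, hK.of_betti_le_sum R h⟩

variable (A M) in
/-- The module `M` admits a reduction of complexity: an exact sequence `0 → M → K → Ω^n(M) → 0`,
such as the pushout sequence of an element of `Ext^{n+1}(M, M)`, with `cx K < cx M`. -/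
def HasComplexityReduction : Prop :=
  ∃ (K S : ModuleCat.{u} A) (n : ℕ) (f : M →ₗ[A] K) (g : K →ₗ[A] S),
    IsSyzygyOf A M S n ∧ IsSES f g ∧ complexity A K < complexity A M

theorem HasComplexityReduction.exists_not_extVanish (h : HasComplexityReduction A M)
    (R : MinFreeRes A M) (N : ℕ) : ∃ i, N ≤ i ∧ ¬ extVanish A M i M := by
  obtain ⟨K, S, n, f, g, hS, hfg, hlt⟩ := h
  refine ⟨(n + 1) * N, Nat.le_mul_of_pos_left N n.succ_pos, fun hN => hlt.not_ge ?_⟩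
  exact complexity_le_of_betti_le_sum R (betti_le_sum hS hfg hN)

end Complexity

section ProjectiveDimension

theorem exists_surjective_residueField {A M : Type*} [CommRing A] [IsLocalRing A] [AddCommGroup M]
    [Module A M] [Module.Finite A M] [Nontrivial M] :
    ∃ φ : M →ₗ[A] ResidueField A, Function.Surjective φ := by
  obtain ⟨P, hP, -⟩ := (eq_top_or_exists_le_coatom (⊥ : Submodule A M)).resolve_left bot_ne_top
  obtain ⟨m, hm, ⟨e⟩⟩ := isSimpleModule_iff_quot_maximal.1 (isSimpleModule_iff_isCoatom.2 hP)
  obtain rfl := eq_maximalIdeal hm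
  exact ⟨e.toLinearMap ∘ₗ P.mkQ, e.surjective.comp P.mkQ_surjective⟩

variable {A : Type u} [CommRing A] [IsLocalRing A] {M : Type u} [AddCommGroup M] [Module A M]

theorem MinFreeRes.hasProjectiveDimensionLT_of_b_eq_zero (R : MinFreeRes A M) {d : ℕ}
    (hd : R.b d = 0) : HasProjectiveDimensionLT (ModuleCat.of A M) d := by
  induction d generalizing M with
  | zero =>
    rw [hasProjectiveDimensionLT_zero_iff_isZero, ModuleCat.isZero_iff_subsingleton]
    have : IsEmpty (Fin (R.b 0)) := by rw [hd]; infer_instance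
    exact R.aug_surjective.subsingleton
  | succ d ih =>
    exact R.shortExact_s4.hasProjectiveDimensionLT_X₃ d (ih R.tail hd)
      (hasProjectiveDimensionLT_of_ge _ 1 _ (by omega))

theorem MinFreeRes.b_eq_zero_iff (R : MinFreeRes A M) {i : ℕ} :
    R.b i = 0 ↔ Subsingleton (Abelian.Ext (ModuleCat.of A M) (residueFieldObj A) i) := by
  rw [← Module.length_eq_zero_iff (R := A), ← betti, R.betti_eq, Nat.cast_eq_zero]

theorem MinFreeRes.hasProjectiveDimensionLT_iff (R : MinFreeRes A M) {d : ℕ} :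
    HasProjectiveDimensionLT (ModuleCat.of A M) d ↔ R.b d = 0 :=
  ⟨fun _ => R.b_eq_zero_iff.2
    (HasProjectiveDimensionLT.subsingleton (ModuleCat.of A M) d d le_rfl _),
    R.hasProjectiveDimensionLT_of_b_eq_zero⟩

theorem MinFreeRes.hasProjDimLE_iff (R : MinFreeRes A M) {t : ℕ} :
    HasProjDimLE A M t ↔ R.b (t + 1) = 0 := by
  refine ⟨fun ⟨R', h⟩ => ?_, fun h => ⟨R, fun i hi => ?_⟩⟩
  · rw [← R.hasProjectiveDimensionLT_iff, R'.hasProjectiveDimensionLT_iff]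
    exact h _ t.lt_succ_self
  · have := R.hasProjectiveDimensionLT_iff.2 h
    exact R.hasProjectiveDimensionLT_iff.1 (hasProjectiveDimensionLT_of_ge _ (t + 1) i hi)

theorem HasProjDimLE.extVanish {t : ℕ} (h : HasProjDimLE A M t) {N : Type u} [AddCommGroup N]
    [Module A N] {i : ℕ} (hi : t < i) : extVanish A M i N := by
  obtain ⟨R, hR⟩ := h
  have := R.hasProjectiveDimensionLT_iff.2 (hR i hi)
  exact extVanish_iff_s4.2 (HasProjectiveDimensionLT.subsingleton _ i i le_rfl _)

theorem sSup_not_extVanish_le_projDim {N : Type u} [AddCommGroup N] [Module A N] :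
    sSup {c : ℕ∞ | ∃ i : ℕ, c = i ∧ ¬ extVanish A M i N} ≤ projDim A M := by
  refine sSup_le fun _ ⟨i, hi, hv⟩ => le_sInf fun _ ⟨t, ht, h⟩ => ?_
  rw [hi, ht, Nat.cast_le]
  exact not_lt.1 fun hlt => hv (h.extVanish hlt)

theorem MinFreeRes.not_extVanish (R : MinFreeRes A M) {d : ℕ} (hd : R.b d ≠ 0)
    (hd' : R.b (d + 1) = 0) : ¬ extVanish A M d M := by
  intro hv
  have : Subsingleton (Abelian.Ext (ModuleCat.of A M) (ModuleCat.of A M) d) := extVanish_iff_s4.1 hv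
  have := R.hasProjectiveDimensionLT_iff.2 hd'
  have : Module.Finite A M := .of_surjective R.aug R.aug_surjective
  have : Nontrivial M := by
    by_contra hM
    rw [not_nontrivial_iff_subsingleton, ← ModuleCat.isZero_iff_subsingleton (M := .of A M),
      ← hasProjectiveDimensionLT_zero_iff_isZero] at hM
    exact hd (R.hasProjectiveDimensionLT_iff.1 (hasProjectiveDimensionLT_of_ge _ 0 d d.zero_le))
  obtain ⟨φ, hφ⟩ := exists_surjective_residueField (A := A) (M := M)
  have : Epi (ModuleCat.ofHom φ) := (ModuleCat.epi_iff_surjective _).2 hφ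
  exact hd (R.b_eq_zero_iff.2 (subsingleton_ext_of_epi (ModuleCat.ofHom φ)))

theorem HasFiniteProjDim.projDim_le_sSup (h : HasFiniteProjDim A M) :
    projDim A M ≤ sSup {c : ℕ∞ | ∃ i : ℕ, c = i ∧ ¬ extVanish A M i M} := by
  classical
  obtain ⟨R, -⟩ := Nat.find_spec h
  have hle : projDim A M ≤ Nat.find h := sInf_le ⟨_, rfl, Nat.find_spec h⟩
  rcases hd : Nat.find h with _ | d
  · exact hle.trans (by simp [hd])
  · refine hle.trans (le_sSup ⟨Nat.find h, rfl, ?_⟩)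
    rw [hd]
    exact R.not_extVanish (fun h0 => Nat.find_min h (hd ▸ d.lt_succ_self) (R.hasProjDimLE_iff.2 h0))
      (R.hasProjDimLE_iff.1 (hd ▸ Nat.find_spec h))

end ProjectiveDimension

section FreeReducibleComplexity

variable {A : Type u} [CommRing A] [IsLocalRing A] {M : Type u} [AddCommGroup M] [Module A M]

theorem nonempty_minFreeRes_of_complexity_ne_top (h : complexity A M ≠ ⊤) :
    Nonempty (MinFreeRes A M) := by
  by_contra hR
  exact h (sInf_eq_top.2 fun _ ⟨_, _, R, _⟩ => (hR ⟨R⟩).elim)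

theorem HasFreeRedCx.nonempty_minFreeRes (h : HasFreeRedCx A M) : Nonempty (MinFreeRes A M) := by
  cases h with
  | of_finite_projDim _ _ h => exact h.elim fun _ ⟨R, _⟩ => ⟨R⟩
  | step _ _ _ _ _ _ _ hfin => exact nonempty_minFreeRes_of_complexity_ne_top hfin

theorem HasFreeRedCx.hasFiniteProjDim_or_hasComplexityReduction (h : HasFreeRedCx A M) :
    HasFiniteProjDim A M ∨ HasComplexityReduction A M := by
  cases h with
  | of_finite_projDim _ _ h => exact .inl h
  | step _ K S n _ _ hpos hfin hS f g hfg hcx _ =>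
    refine .inr ⟨K, S, n, f, g, hS, hfg, ?_⟩
    have : complexity A K + 1 = complexity A M := by
      rw [hcx, tsub_add_cancel_of_le (Order.one_le_iff_pos.2 hpos)]
    exact (ENat.add_one_le_iff' hfin).1 this.le

end FreeReducibleComplexity

end ComplexityTest

theorem projDim_eq_sup_ext_nonvanishing_general
    {A : Type u} [CommRing A] [IsLocalRing A] {M : Type u} [AddCommGroup M] [Module A M]
    (R : MinFreeRes A M) (hM : HasFiniteProjDim A M ∨ HasComplexityReduction A M) :
    projDim A M = sSup {c : ℕ∞ | ∃ i : ℕ, c = i ∧ ¬ extVanish A M i M} ∧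
      (¬ HasFiniteProjDim A M → ∀ n : ℕ, ∃ i : ℕ, n ≤ i ∧ ¬ extVanish A M i M) := by
  have hinf (h : ¬ HasFiniteProjDim A M) (n : ℕ) : ∃ i : ℕ, n ≤ i ∧ ¬ extVanish A M i M :=
    (hM.resolve_left h).exists_not_extVanish R n
  refine ⟨sSup_not_extVanish_le_projDim.antisymm' ?_, hinf⟩
  by_cases h : HasFiniteProjDim A M
  · exact h.projDim_le_sSup
  · refine le_top.trans (ENat.eq_top_iff_forall_ge.2 fun n => ?_).ge
    obtain ⟨i, hi, hv⟩ := hinf h n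
    exact (Nat.cast_le.2 hi).trans (le_sSup ⟨i, rfl, hv⟩)


/-- **Proposition 3.1**: if `M` has free reducible complexity over the local ring `A`,
then `pd_A M = sup { i | Ext^i_A(M,M) ≠ 0 }`; in particular, if `M` has infinite
projective dimension then `Ext^i_A(M,M) ≠ 0` for infinitely many `i`. -/
theorem projDim_eq_sup_ext_nonvanishing
    (A : Type u) [CommRing A] [IsLocalRing A] [IsNoetherianRing A]
    (M : Type u) [AddCommGroup M] [Module A M] [Module.Finite A M]
    (hM : HasFreeRedCx A M) :
    projDim A M = sSup {c : ℕ∞ | ∃ i : ℕ, c = i ∧ ¬ extVanish A M i M} ∧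
      (¬ HasFiniteProjDim A M → ∀ n : ℕ, ∃ i : ℕ, n ≤ i ∧ ¬ extVanish A M i M) := by
  obtain ⟨R⟩ := hM.nonempty_minFreeRes
  exact projDim_eq_sup_ext_nonvanishing_general R hM.hasFiniteProjDim_or_hasComplexityReduction
end
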